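/- Suppose t, u ∈ E are both differentially transcendental over F and F⟨{t}⟩ = F⟨{u}⟩. Then there exist a, b, c, d ∈ F with a·d − b·c ≠ 0 such that c·t + d ≠ 0 and u = (a·t + b)/(c·t + d). -/

import Mathlib

/-!
Write `t_k = D^k t`, `u_k = D^k u`, and let `acl S` be the set of elements of `E` algebraic over
`F(S)`, i.e. the closure operator of the algebraic independence matroid of `E/F`.

*Order zero.* Let `m + 1` be the least `n` with `u ∈ acl {t_i | i < n}`. The exchange property gives
`t_m ∈ acl {t_0, …, t_{m-1}, u}`. In characteristic zero, `D` maps `acl S` into any algebraically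
closed `acl T` containing `S` and `D S` (`deriv_mem_acl`), so differentiating `k` times gives
`t_{m+k} ∈ acl {t_0, …, t_{m-1}, u_0, …, u_k}`. On the other hand `t ∈ F⟨u⟩` is algebraic over
`F(u_0, …, u_M)` for some `M`. If `m ≥ 1`, then `t_0` is redundant on the right for `k = M`, so the
`m + M + 1` independent elements `t_0, …, t_{m+M}` lie in the closure of `m + M` elements: a
contradiction. Hence `m = 0` and `u` is algebraic over `F(t)` (`mem_acl_singleton`).

*Descent to `F(t)`.* The extension `F⟨t⟩ / F(t)` is purely transcendental, hence `F(t)` is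
algebraically closed in it (`mem_range_of_isAlgebraic`), so `u ∈ F(t)`. By symmetry `t ∈ F(u)`.

*Möbius form.* Thus `F(t) = F(u)`, and since `[F(X) : F(f)]` is the maximum of the degrees of the
numerator and denominator of `f`, the element `u` is a rational function of degree one in `t`
(`mobius_of_adjoin_eq`).
-/

open MvPolynomial

noncomputable section

namespace DiffCurve

variable (F : Type*) {E : Type*} [Field F] [Field E] [Algebra F E]

/-- `F⟨S⟩`: the intermediate field of `E/F` generated by all iterated derivatives of
elements of `S`. -/
def genDF (D : Derivation ℤ E E) (S : Set E) : IntermediateField F E :=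
  IntermediateField.adjoin F {x | ∃ s ∈ S, ∃ k : ℕ, (⇑D)^[k] s = x}

/-- `u` is differentially transcendental over `F`. -/
def DiffTrans (D : Derivation ℤ E E) (u : E) : Prop :=
  AlgebraicIndependent F (fun k : ℕ => (⇑D)^[k] u)

/-- Evaluation of `P ∈ F{u}` at `v`: the `F`-algebra map sending `u_k ↦ D^k v`. -/
def evalD (D : Derivation ℤ E E) (v : E) : MvPolynomial ℕ F →ₐ[F] E :=
  aeval fun k => (⇑D)^[k] v

/-- Evaluation of `A ∈ F{x,y}` at `(η₁, η₂)`: `x_k ↦ D^k η₁`, `y_k ↦ D^k η₂`. -/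
def evalD2 (D : Derivation ℤ E E) (η₁ η₂ : E) : MvPolynomial (Fin 2 × ℕ) F →ₐ[F] E :=
  aeval fun p => (⇑D)^[p.2] (if p.1 = 0 then η₁ else η₂)

variable {F}

/-- The order of `P ∈ F{u}`: the largest `k` such that `u_k` occurs (`⊥` if none). -/
def ordU (P : MvPolynomial ℕ F) : WithBot ℕ := P.vars.max

/-- `ord_x` (for `i = 0`) resp. `ord_y` (for `i = 1`) of `A ∈ F{x,y}`. -/
def ordIdx (i : Fin 2) (A : MvPolynomial (Fin 2 × ℕ) F) : WithBot ℕ :=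
  ((A.vars.filter fun v => v.1 = i).image Prod.snd).max

/-- `ord(A) = max(ord_x A, ord_y A)`. -/
def ordXY (A : MvPolynomial (Fin 2 × ℕ) F) : WithBot ℕ :=
  max (ordIdx 0 A) (ordIdx 1 A)

/-- The separant of `A` w.r.t. `x`: `∂A/∂x_s` where `s = ord_x A` (junk value `1` if
`ord_x A = ⊥`). -/
def sepX (A : MvPolynomial (Fin 2 × ℕ) F) : MvPolynomial (Fin 2 × ℕ) F :=
  WithBot.recBotCoe 1 (fun s => pderiv ((0 : Fin 2), s) A) (ordIdx 0 A)

/-- The differential ideal `[A]` generated by `A`, for a derivation `d`. -/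
def diffIdeal {R : Type*} [CommRing R] (d : Derivation ℤ R R) (A : R) : Ideal R :=
  Ideal.span (Set.range fun k : ℕ => (⇑d)^[k] A)

/-- The general component `sat(A) = [A] : S_A^∞` (as a set). -/
def satSet (dxy : Derivation ℤ (MvPolynomial (Fin 2 × ℕ) F) (MvPolynomial (Fin 2 × ℕ) F))
    (A : MvPolynomial (Fin 2 × ℕ) F) : Set (MvPolynomial (Fin 2 × ℕ) F) :=
  {f | ∃ m : ℕ, sepX A ^ m * f ∈ diffIdeal dxy A}

variable (F)

/-- `(u, P₁, Q₁, P₂, Q₂)` is a differential rational parametrization of the differential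
curve `(C, A)`. -/
def IsParam (D : Derivation ℤ E E)
    (dxy : Derivation ℤ (MvPolynomial (Fin 2 × ℕ) F) (MvPolynomial (Fin 2 × ℕ) F))
    (A : MvPolynomial (Fin 2 × ℕ) F) (u : E) (P₁ Q₁ P₂ Q₂ : MvPolynomial ℕ F) : Prop :=
  DiffTrans F D u ∧
  P₁ ≠ 0 ∧ Q₁ ≠ 0 ∧ IsRelPrime P₁ Q₁ ∧ P₂ ≠ 0 ∧ Q₂ ≠ 0 ∧ IsRelPrime P₂ Q₂ ∧
  ¬ (evalD F D u P₁ / evalD F D u Q₁ ∈ (algebraMap F E).range ∧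
     evalD F D u P₂ / evalD F D u Q₂ ∈ (algebraMap F E).range) ∧
  {B : MvPolynomial (Fin 2 × ℕ) F |
      evalD2 F D (evalD F D u P₁ / evalD F D u Q₁) (evalD F D u P₂ / evalD F D u Q₂) B = 0}
    = satSet dxy A

/-- A proper differential rational parametrization: additionally
`F⟨η₁, η₂⟩ = F⟨u⟩`. -/
def IsProperParam (D : Derivation ℤ E E)
    (dxy : Derivation ℤ (MvPolynomial (Fin 2 × ℕ) F) (MvPolynomial (Fin 2 × ℕ) F))
    (A : MvPolynomial (Fin 2 × ℕ) F) (u : E) (P₁ Q₁ P₂ Q₂ : MvPolynomial ℕ F) : Prop :=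
  IsParam F D dxy A u P₁ Q₁ P₂ Q₂ ∧
  genDF F D {evalD F D u P₁ / evalD F D u Q₁, evalD F D u P₂ / evalD F D u Q₂}
    = genDF F D {u}

/-- The projection `F{x,y,u} → F{x,y}` sending `u_k ↦ 0` and keeping `x_k`, `y_k`. -/
def projXY : MvPolynomial (Fin 3 × ℕ) F →ₐ[F] MvPolynomial (Fin 2 × ℕ) F :=
  aeval fun p => if h : (p.1 : ℕ) < 2 then X ((⟨p.1, h⟩ : Fin 2), p.2) else 0

/-- The `i`-th row polynomial of the differential resultant matrix:
`d^{m₂}f₁, …, f₁, d^{m₁}f₂, …, f₂` where `f₁ = x₀·Q₁ − P₁`, `f₂ = y₀·Q₂ − P₂`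
in `F{x,y,u}`. -/
def resRow (dxyu : Derivation ℤ (MvPolynomial (Fin 3 × ℕ) F) (MvPolynomial (Fin 3 × ℕ) F))
    (P₁ Q₁ P₂ Q₂ : MvPolynomial ℕ F) (m₁ m₂ : ℕ) (i : ℕ) : MvPolynomial (Fin 3 × ℕ) F :=
  if i ≤ m₂ then
    (⇑dxyu)^[m₂ - i] (X ((0 : Fin 3), 0) * rename (fun k => ((2 : Fin 3), k)) Q₁
      - rename (fun k => ((2 : Fin 3), k)) P₁)
  else
    (⇑dxyu)^[m₁ + m₂ + 1 - i] (X ((1 : Fin 3), 0) * rename (fun k => ((2 : Fin 3), k)) Q₂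
      - rename (fun k => ((2 : Fin 3), k)) P₂)

/-- The differential resultant `δ-Res(f₁, f₂) ∈ F{x,y}`: the determinant of the
`(m₁+m₂+2) × (m₁+m₂+2)` matrix whose rows are the coefficient vectors of
`d^{m₂}f₁, …, f₁, d^{m₁}f₂, …, f₂` w.r.t. `u_{m₁+m₂}, …, u_1, u_0, 1`. -/
def deltaRes (dxyu : Derivation ℤ (MvPolynomial (Fin 3 × ℕ) F) (MvPolynomial (Fin 3 × ℕ) F))
    (P₁ Q₁ P₂ Q₂ : MvPolynomial ℕ F) (m₁ m₂ : ℕ) : MvPolynomial (Fin 2 × ℕ) F :=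
  Matrix.det (Matrix.of fun i j : Fin (m₁ + m₂ + 2) =>
    if (j : ℕ) ≤ m₁ + m₂ then
      projXY F (pderiv ((2 : Fin 3), m₁ + m₂ - (j : ℕ)) (resRow F dxyu P₁ Q₁ P₂ Q₂ m₁ m₂ i))
    else projXY F (resRow F dxyu P₁ Q₁ P₂ Q₂ m₁ m₂ i))

/-- A linear homogeneous differential polynomial `L = Σ_k a_k u_k` in `F{u}`. -/
def IsLinHom {F : Type*} [Field F] (L : MvPolynomial ℕ F) : Prop :=
  ∀ m ∈ L.support, ∃ k : ℕ, m = Finsupp.single k 1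



/-! ### Rational function fields -/

/-- The base field is algebraically closed in a purely transcendental extension. A polynomial ring
over a field is integrally closed, so an algebraic `x ≠ 0` and its inverse both come from
polynomials; these are mutually inverse, hence constants. -/
theorem mem_range_of_isAlgebraic {ι K L : Type*} [Field K] [Field L] [Algebra K L] {y : ι → L}
    (hy : AlgebraicIndependent K y) {x : L}
    (hx : x ∈ IntermediateField.adjoin K (Set.range y)) (hxa : IsAlgebraic K x) :
    x ∈ (algebraMap K L).range := by
  let e := hy.aevalEquivField
  set z : FractionRing (MvPolynomial ι K) := e.symm ⟨x, hx⟩ with hz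
  have hez : ((e z : IntermediateField.adjoin K (Set.range y)) : L) = x := by simp [hz]
  have hza : IsIntegral K z := by
    rw [← isAlgebraic_iff_isIntegral]
    have h1 : IsAlgebraic K (⟨x, hx⟩ : IntermediateField.adjoin K (Set.range y)) :=
      (isAlgebraic_algebraMap_iff (A := L) (Subtype.val_injective)).mp hxa
    exact h1.algHom e.symm.toAlgHom
  by_cases h0 : z = 0
  · refine ⟨0, ?_⟩
    rw [← hez, h0]; simp
  have : IsIntegrallyClosed (MvPolynomial ι K) := UniqueFactorizationMonoid.instIsIntegrallyClosed
  obtain ⟨p, hp⟩ := IsIntegrallyClosed.isIntegral_iff (R := MvPolynomial ι K).mp hza.tower_top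
  obtain ⟨q, hq⟩ := IsIntegrallyClosed.isIntegral_iff (R := MvPolynomial ι K).mp
    hza.inv.tower_top
  have hpq : p * q = 1 := by
    apply IsFractionRing.injective (MvPolynomial ι K) (FractionRing (MvPolynomial ι K))
    rw [map_mul, hp, hq, map_one, mul_inv_cancel₀ h0]
  obtain ⟨r, -, hr⟩ := MvPolynomial.isUnit_iff_eq_C_of_isReduced.mp (IsUnit.of_mul_eq_one _ hpq)
  refine ⟨r, ?_⟩
  rw [← hez, ← hp, hr, AlgebraicIndependent.aevalEquivField_algebraMap_apply_coe, aeval_C]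

/-- Two transcendental generators of the same simple extension differ by a Möbius
transformation. -/
theorem mobius_of_adjoin_eq {F E : Type*} [Field F] [Field E] [Algebra F E] {t u : E}
    (ht : Transcendental F t) (hu : Transcendental F u)
    (hut : u ∈ IntermediateField.adjoin F {t}) (htu : t ∈ IntermediateField.adjoin F {u}) :
    ∃ a b c d : F, a * d - b * c ≠ 0 ∧
      algebraMap F E c * t + algebraMap F E d ≠ 0 ∧
      u = (algebraMap F E a * t + algebraMap F E b)
        / (algebraMap F E c * t + algebraMap F E d) := by
  let e := RatFunc.algEquivOfTranscendental t ht
  set f : RatFunc F := e.symm ⟨u, hut⟩ with hf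
  have hef : ((e f : IntermediateField.adjoin F {t}) : E) = u := by simp [hf]
  -- The isomorphism `F(X) ≃ F(t)` carries `F(f)` onto `F(u)`, which contains `t`.
  have hX : (RatFunc.X : RatFunc F) ∈ IntermediateField.adjoin F {f} := by
    let φ : RatFunc F →ₐ[F] E := (IntermediateField.val _).comp e.toAlgHom
    have hφX : φ RatFunc.X = t := RatFunc.algEquivOfTranscendental_X t ht
    have hmap : (IntermediateField.adjoin F {f}).map φ = IntermediateField.adjoin F {u} := by
      rw [IntermediateField.adjoin_map, Set.image_singleton]
      congr 2
    rw [← hmap, IntermediateField.mem_map] at htu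
    obtain ⟨g, hg, hgt⟩ := htu
    rwa [← φ.injective (hgt.trans hφX.symm)]
  have htop : IntermediateField.adjoin F {f} = ⊤ := by
    rw [eq_top_iff, ← RatFunc.adjoin_X]
    exact IntermediateField.adjoin_simple_le_iff.mpr hX
  have hdeg : max f.num.natDegree f.denom.natDegree = 1 := by
    rw [← RatFunc.finrank_eq_max_natDegree, htop]
    exact IntermediateField.finrank_top
  have hfu : u = Polynomial.aeval t f.num / Polynomial.aeval t f.denom := by
    rw [← hef]; exact RatFunc.algEquivOfTranscendental_apply t ht f
  have hden : Polynomial.aeval t f.denom ≠ 0 := fun h0 =>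
    f.denom_ne_zero (transcendental_iff.mp ht _ h0)
  rw [Polynomial.eq_X_add_C_of_natDegree_le_one (le_of_max_le_left hdeg.le),
    Polynomial.eq_X_add_C_of_natDegree_le_one (p := f.denom) (le_of_max_le_right hdeg.le)] at hfu
  rw [Polynomial.eq_X_add_C_of_natDegree_le_one (p := f.denom) (le_of_max_le_right hdeg.le)] at hden
  generalize f.num.coeff 1 = a at *
  generalize f.num.coeff 0 = b at *
  generalize f.denom.coeff 1 = c at *
  generalize f.denom.coeff 0 = d at *
  simp only [map_add, map_mul, Polynomial.aeval_C, Polynomial.aeval_X] at hfu hden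
  refine ⟨a, b, c, d, fun hdet => ?_, hden, hfu⟩
  -- A vanishing determinant would make `u` a constant.
  have hdet' : algebraMap F E a * algebraMap F E d = algebraMap F E b * algebraMap F E c := by
    rw [← map_mul, ← map_mul, sub_eq_zero.mp hdet]
  rw [eq_div_iff hden] at hfu
  have hc : algebraMap F E c * u = algebraMap F E a :=
    mul_right_cancel₀ hden (by linear_combination algebraMap F E c * hfu - hdet')
  have hd : algebraMap F E d * u = algebraMap F E b :=
    mul_right_cancel₀ hden (by linear_combination algebraMap F E d * hfu + t * hdet')
  have key : ∀ x y : F, algebraMap F E x * u = algebraMap F E y → x = 0 := by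
    intro x y hxy
    by_contra hx
    have hx' : algebraMap F E x ≠ 0 := by simpa using hx
    apply hu
    have : u = algebraMap F E (y / x) := by
      rw [map_div₀, eq_div_iff hx', mul_comm, hxy]
    rw [this]
    exact isAlgebraic_algebraMap _
  rw [key c a hc, key d b hd] at hden
  simp at hden

section

/-! ### Algebraic closure inside `E` and derivations -/

/-- The elements of `E` that are algebraic over `F(S)`, encoded as the closure of `S` in the
algebraic independence matroid so that exchange and rank inequalities are available. -/
abbrev acl (S : Set E) : Set E := (AlgebraicIndependent.matroid F E).closure S

variable {F}

theorem mem_acl {S : Set E} {x : E} :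
    x ∈ acl F S ↔ IsAlgebraic (IntermediateField.adjoin F S) x := by
  rw [acl, AlgebraicIndependent.matroid_closure_eq, IntermediateField.isAlgebraic_adjoin_iff]
  exact Iff.rfl

/-- `acl F S` is an intermediate field that is algebraically closed in `E`. -/
theorem exists_intermediateField_acl (S : Set E) :
    ∃ L : IntermediateField F E, (L : Set E) = acl F S ∧ ∀ x : E, IsAlgebraic L x → x ∈ L := by
  have h : (((algebraicClosure (IntermediateField.adjoin F S) E).restrictScalars F :
      IntermediateField F E) : Set E) = acl F S := by
    ext x
    rw [mem_acl]
    exact mem_algebraicClosure_iff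
  refine ⟨_, h, fun x hx => ?_⟩
  rw [← SetLike.mem_coe, h, acl, ← Matroid.closure_closure, mem_acl]
  rw [acl] at h
  rwa [← h, IntermediateField.adjoin_self]

/-- In characteristic zero, `D` maps `acl F S` into `acl F T` as soon as the latter contains `S` and
`D S`: if `p` is the minimal polynomial of `x` over `F(S)`, then differentiating `p(x) = 0` expresses
`D x` rationally in terms of `x`, the coefficients of `p` and their derivatives, since
`p'(x) ≠ 0`. -/
theorem deriv_mem_acl [CharZero F] {δF : Derivation ℤ F F} {D : Derivation ℤ E E}
    (hD : ∀ a : F, D (algebraMap F E a) = algebraMap F E (δF a)) {S T : Set E}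
    (hST : S ⊆ acl F T) (hDS : ∀ s ∈ S, D s ∈ acl F T) {x : E} (hx : x ∈ acl F S) :
    D x ∈ acl F T := by
  have hxT : x ∈ acl F T :=
    (AlgebraicIndependent.matroid F E).closure_subset_closure_of_subset_closure hST hx
  obtain ⟨L, hL, -⟩ := exists_intermediateField_acl (F := F) T
  rw [← hL] at hST hxT ⊢
  simp only [← hL, SetLike.mem_coe] at hDS hxT ⊢
  have hSL : IntermediateField.adjoin F S ≤ L := IntermediateField.adjoin_le_iff.mpr hST
  have hK : ∀ y ∈ IntermediateField.adjoin F S, D y ∈ L := by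
    intro y hy
    induction hy using IntermediateField.adjoin_induction with
    | mem y hy => exact hDS y hy
    | algebraMap a => rw [hD]; exact L.algebraMap_mem _
    | add y z _ _ h1 h2 => rw [map_add]; exact add_mem h1 h2
    | inv y hy h1 =>
      rw [Derivation.leibniz_inv]
      exact mul_mem (neg_mem (pow_mem (inv_mem (hSL hy)) 2)) h1
    | mul y z hy hz h1 h2 =>
      rw [Derivation.leibniz]
      exact add_mem (mul_mem (hSL hy) h2) (mul_mem (hSL hz) h1)
  -- `D (q(x)) = q^D(x) + q'(x) D x`, where `q^D` has the differentiated coefficients.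
  have hpoly : ∀ q : Polynomial (IntermediateField.adjoin F S),
      D (Polynomial.aeval x q) - Polynomial.aeval x (Polynomial.derivative q) * D x ∈ L := by
    intro q
    induction q using Polynomial.induction_on' with
    | add p q hp hq =>
      have := add_mem hp hq
      simp only [map_add]
      convert this using 1
      ring
    | monomial n a =>
      have : D (Polynomial.aeval x (Polynomial.monomial n a)) -
          Polynomial.aeval x (Polynomial.derivative (Polynomial.monomial n a)) * D x =
          x ^ n * D (a : E) := by
        simp only [Polynomial.aeval_monomial, Polynomial.derivative_monomial, Derivation.leibniz,
          Derivation.leibniz_pow, map_mul, map_natCast, IntermediateField.algebraMap_apply,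
          smul_eq_mul, nsmul_eq_mul]
        ring
      rw [this]
      exact mul_mem (pow_mem hxT n) (hK a a.2)
  rw [mem_acl] at hx
  have hsep := (minpoly.irreducible hx.isIntegral).separable.aeval_derivative_ne_zero
    (minpoly.aeval _ x)
  set p := minpoly (IntermediateField.adjoin F S) x with hp
  have hmem : Polynomial.aeval x (Polynomial.derivative p) ∈ L := by
    rw [Polynomial.aeval_eq_sum_range]
    refine sum_mem fun i _ => ?_
    rw [IntermediateField.smul_def, smul_eq_mul]
    exact mul_mem (hSL (Subtype.prop _)) (pow_mem hxT i)
  have key := hpoly p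
  rw [minpoly.aeval, map_zero, zero_sub, neg_mem_iff] at key
  have := mul_mem (inv_mem hmem) key
  rwa [inv_mul_cancel_left₀ hsep] at this

/-! ### Differentially transcendental elements -/

/-- The set of derivatives `D^k u` with `k ∈ I`. -/
abbrev jet (D : Derivation ℤ E E) (u : E) (I : Set ℕ) : Set E := (fun k => (⇑D)^[k] u) '' I

theorem subset_acl (S : Set E) : S ⊆ acl F S :=
  (AlgebraicIndependent.matroid F E).subset_closure S (Set.subset_univ _)

theorem acl_mono {S T : Set E} (h : S ⊆ T) : acl F S ⊆ acl F T :=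
  (AlgebraicIndependent.matroid F E).closure_subset_closure h

theorem acl_subset {S T : Set E} (h : S ⊆ acl F T) : acl F S ⊆ acl F T :=
  (AlgebraicIndependent.matroid F E).closure_subset_closure_of_subset_closure h

/-- Elements of `F⟨u⟩` are algebraic over a field generated by finitely many derivatives of `u`. -/
theorem exists_mem_acl_jet {D : Derivation ℤ E E} {u x : E} (hx : x ∈ genDF F D {u}) :
    ∃ n, x ∈ acl F (jet D u (Set.Iio n)) := by
  have hset : {x | ∃ s ∈ ({u} : Set E), ∃ k : ℕ, (⇑D)^[k] s = x} = jet D u Set.univ := by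
    ext; simp [jet]
  rw [genDF, hset] at hx
  have hx' : x ∈ acl F (jet D u Set.univ) :=
    mem_acl.mpr (isAlgebraic_algebraMap (⟨x, hx⟩ : IntermediateField.adjoin F _))
  obtain ⟨I, hI, hIf, -, hxI⟩ := Matroid.exists_mem_finite_closure_of_mem_closure hx'
  classical
  obtain ⟨I, rfl⟩ := hIf.exists_finset_coe
  obtain ⟨J, -, rfl⟩ := Finset.subset_set_image_iff.mp hI
  refine ⟨J.sup id + 1, acl_mono ?_ hxI⟩
  rw [Finset.coe_image]
  exact Set.image_mono fun k hk => Nat.lt_succ_of_le (Finset.le_sup (f := id) hk)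

/-- The order-zero step: if `F⟨t⟩ = F⟨u⟩`, then `u` is already algebraic over `F(t)`. -/
theorem mem_acl_singleton [CharZero F]
    {δF : Derivation ℤ F F} {D : Derivation ℤ E E}
    (hD : ∀ a : F, D (algebraMap F E a) = algebraMap F E (δF a))
    {t u : E} (ht : DiffTrans F D t) (hu : DiffTrans F D u)
    (hut : u ∈ genDF F D {t}) (htu : t ∈ genDF F D {u}) : u ∈ acl F {t} := by
  classical
  obtain ⟨M, hM⟩ := exists_mem_acl_jet htu
  have hN := exists_mem_acl_jet hut
  set n := Nat.find hN with hn
  have hun : u ∈ acl F (jet D t (Set.Iio n)) := Nat.find_spec hN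
  have hu0 : u ∉ acl F (jet D t (Set.Iio 0)) := by
    have h0 : (AlgebraicIndependent.matroid F E).Indep {u} := by
      rw [AlgebraicIndependent.matroid_indep_iff]
      exact (algebraicIndependent_singleton_iff (⟨u, rfl⟩ : ({u} : Set E))).mpr (hu.transcendental 0)
    intro h
    have : jet D t (Set.Iio 0) = ∅ := by simp [jet]
    rw [this] at h
    exact h0.isNonloop_of_mem rfl |>.not_isLoop h
  obtain ⟨m, hm⟩ : ∃ m, n = m + 1 := Nat.exists_eq_succ_of_ne_zero (fun h => hu0 (h ▸ hun))
  have hum : u ∉ acl F (jet D t (Set.Iio m)) := Nat.find_min hN (by omega)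
  have hins : jet D t (Set.Iio (m + 1)) = insert ((⇑D)^[m] t) (jet D t (Set.Iio m)) := by
    have hIio : insert m (Set.Iio m) = Set.Iio (m + 1) := by ext; simp
    rw [← hIio, jet, Set.image_insert_eq]
  have hex : (⇑D)^[m] t ∈ acl F (insert u (jet D t (Set.Iio m))) := by
    rw [hm, hins] at hun
    exact (Matroid.closure_exchange ⟨hun, hum⟩).1
  -- Differentiating the relation for `t_m` repeatedly.
  have hstep : ∀ k, (⇑D)^[m + k] t ∈
      acl F (jet D t (Set.Iio m) ∪ jet D u (Set.Iio (k + 1))) := by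
    intro k
    induction k with
    | zero =>
      refine acl_mono ?_ hex
      refine Set.insert_subset (Or.inr ⟨0, by simp, rfl⟩) Set.subset_union_left
    | succ k ih =>
      rw [← add_assoc, Function.iterate_succ_apply']
      have hmono : jet D u (Set.Iio (k + 1)) ⊆ jet D u (Set.Iio (k + 1 + 1)) :=
        Set.image_mono (Set.Iio_subset_Iio (by omega))
      refine deriv_mem_acl hD ?_ ?_ ih
      · exact (Set.union_subset_union_right _ hmono).trans (subset_acl _)
      · rintro _ (⟨i, hi, rfl⟩ | ⟨i, hi, rfl⟩)
        · simp only [← Function.iterate_succ_apply']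
          rcases (Nat.succ_le_of_lt hi).lt_or_eq with h | h
          · exact subset_acl _ (Or.inl ⟨i + 1, h, rfl⟩)
          · have : i + 1 = m := h
            rw [Nat.succ_eq_add_one, this]
            refine acl_mono ?_ hex
            exact Set.insert_subset (Or.inr ⟨0, by simp, rfl⟩) Set.subset_union_left
        · simp only [← Function.iterate_succ_apply']
          exact subset_acl _ (Or.inr ⟨i + 1, Nat.succ_lt_succ hi, rfl⟩)
  rcases Nat.eq_zero_or_pos m with h0 | h0
  · rw [hm, h0] at hun
    simpa [jet] using hun
  exfalso
  -- Since `t_0` depends on the `u_j`, it is omitted from the generators; `B` then has at most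
  -- `(m - 1) + (M + 1)` elements.
  set B : Set E := jet D t (Set.Ico 1 m) ∪ jet D u (Set.Iio (M + 1)) with hB
  have htB : t ∈ acl F B :=
    acl_mono ((Set.image_mono (Set.Iio_subset_Iio (by omega))).trans Set.subset_union_right) hM
  have hlow : jet D t (Set.Iio m) ∪ jet D u (Set.Iio (M + 1)) ⊆ acl F B := by
    rintro _ (⟨i, hi, rfl⟩ | hx)
    · rcases Nat.eq_zero_or_pos i with rfl | hi0
      · exact htB
      · exact subset_acl _ (Or.inl ⟨i, ⟨hi0, hi⟩, rfl⟩)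
    · exact subset_acl _ (Or.inr hx)
  have hall : jet D t (Set.Iio (m + M + 1)) ⊆ acl F B := by
    rintro _ ⟨i, hi, rfl⟩
    rcases lt_or_ge i m with him | him
    · exact hlow (Or.inl ⟨i, him, rfl⟩)
    · obtain ⟨k, rfl⟩ := Nat.exists_eq_add_of_le him
      have hi' : m + k < m + M + 1 := hi
      refine acl_subset hlow (acl_mono ?_ (hstep k))
      exact Set.union_subset_union_right _ (Set.image_mono (Set.Iio_subset_Iio (by omega)))
  have hind : (AlgebraicIndependent.matroid F E).Indep (jet D t (Set.Iio (m + M + 1))) := by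
    rw [AlgebraicIndependent.matroid_indep_iff, jet, Set.image_eq_range]
    exact (ht.comp _ Subtype.val_injective).coe_range
  have h1 : ((m + M + 1 : ℕ) : ℕ∞) ≤ B.encard := by
    calc ((m + M + 1 : ℕ) : ℕ∞) = (jet D t (Set.Iio (m + M + 1))).encard := by
          rw [jet, Function.Injective.encard_image ht.injective, ← Finset.coe_Iio,
            Set.encard_coe_eq_coe_finsetCard, Nat.card_Iio]
      _ = (AlgebraicIndependent.matroid F E).eRk (jet D t (Set.Iio (m + M + 1))) :=
          hind.eRk_eq_encard.symm
      _ ≤ (AlgebraicIndependent.matroid F E).eRk (acl F B) := Matroid.eRk_mono _ hall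
      _ ≤ B.encard := by rw [Matroid.eRk_closure_eq]; exact Matroid.eRk_le_encard _ _
  have h2 : B.encard ≤ ((m + M : ℕ) : ℕ∞) := by
    calc B.encard ≤ (Set.Ico 1 m).encard + (Set.Iio (M + 1)).encard :=
          (Set.encard_union_le _ _).trans (add_le_add (Set.encard_image_le _ _)
            (Set.encard_image_le _ _))
      _ = ((m + M : ℕ) : ℕ∞) := by
          rw [← Finset.coe_Iio, ← Finset.coe_Ico, Set.encard_coe_eq_coe_finsetCard,
            Set.encard_coe_eq_coe_finsetCard, Nat.card_Iio, Nat.card_Ico]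
          norm_cast
          omega
  have := h1.trans h2
  norm_cast at this
  omega

/-- `F(t)` is algebraically closed in `F⟨t⟩`, the derivatives `D^k t` with `k ≥ 1` being
algebraically independent over `F(t)`. -/
theorem mem_adjoin_of_mem_acl {D : Derivation ℤ E E} {t x : E} (ht : DiffTrans F D t)
    (hx : x ∈ genDF F D {t}) (hxt : x ∈ acl F {t}) : x ∈ IntermediateField.adjoin F {t} := by
  let K := IntermediateField.adjoin F {t}
  have hind : AlgebraicIndependent K (fun i : (({0}ᶜ : Set ℕ)) => (⇑D)^[i] t) := by
    have := ((AlgebraicIndependent.iff_adjoin_image {0}).mp ht).2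
    rw [Set.image_singleton] at this
    exact IntermediateField.algebraicIndependent_adjoin_iff.mpr this
  rw [mem_acl] at hxt
  have hle : genDF F D {t} ≤ (IntermediateField.adjoin K
      (Set.range (fun i : (({0}ᶜ : Set ℕ)) => (⇑D)^[i] t))).restrictScalars F := by
    rw [genDF, IntermediateField.adjoin_le_iff]
    rintro _ ⟨s, rfl, k, rfl⟩
    rw [SetLike.mem_coe, IntermediateField.mem_restrictScalars]
    rcases Nat.eq_zero_or_pos k with rfl | hk
    · exact (IntermediateField.adjoin K _).algebraMap_mem
        ⟨s, IntermediateField.mem_adjoin_simple_self F s⟩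
    · exact IntermediateField.subset_adjoin _ _ ⟨⟨k, by simp; omega⟩, rfl⟩
  obtain ⟨y, rfl⟩ := mem_range_of_isAlgebraic hind (hle hx) hxt
  exact y.2
end

/-- if `t, u` are differentially transcendental over `F` and
`F⟨t⟩ = F⟨u⟩`, then `u` is a Möbius transform of `t` over `F`. -/
theorem mobius_of_genDF_eq [CharZero F]
    (δF : Derivation ℤ F F) (D : Derivation ℤ E E)
    (hD : ∀ a : F, D (algebraMap F E a) = algebraMap F E (δF a))
    (t u : E) (ht : DiffTrans F D t) (hu : DiffTrans F D u)
    (h : genDF F D {t} = genDF F D {u}) :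
    ∃ a b c d : F, a * d - b * c ≠ 0 ∧
      algebraMap F E c * t + algebraMap F E d ≠ 0 ∧
      u = (algebraMap F E a * t + algebraMap F E b)
        / (algebraMap F E c * t + algebraMap F E d) := by
  have hself : ∀ v : E, v ∈ genDF F D {v} := fun v =>
    IntermediateField.subset_adjoin _ _ ⟨v, rfl, 0, rfl⟩
  have hut : u ∈ genDF F D {t} := h ▸ hself u
  have htu : t ∈ genDF F D {u} := h ▸ hself t
  exact mobius_of_adjoin_eq (ht.transcendental 0) (hu.transcendental 0)
    (mem_adjoin_of_mem_acl ht hut (mem_acl_singleton hD ht hu hut htu))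
    (mem_adjoin_of_mem_acl hu htu (mem_acl_singleton hD hu ht htu hut))
end DiffCurve
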